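/- Let R be a ring and t a central element of R with t² = 0, and let R̄ = R/(t) be the quotient by the two-sided ideal generated by t. Let P be a cochain complex of left R-modules such that each P^j is a projective R-module, and suppose that the reduction P ⧸ tP is homotopy projective over R̄, i.e. for every acyclic cochain complex C of R̄-modules the Hom-complex Hom_{R̄}(P ⧸ tP, C) is acyclic. Then for every cochain complex M of left R-modules such that both the subcomplex tM and the quotient complex M ⧸ tM are acyclic, the Hom-complex Hom_R(P, M) is acyclic; in particular, every morphism of cochain complexes P → M is null-homotopic via an R-linear chain homotopy. -/

import Mathlib

universe u

section Defs

variable {R : Type u} [Ring R]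

/-- Scalar multiplication by a central element `t` of a ring `R`, as an `R`-linear
endomorphism of a left `R`-module `M`. Its range is the submodule `t M`. -/
def centralSmul (t : R) (ht : t ∈ Subring.center R)
    (M : Type u) [AddCommGroup M] [Module R M] : M →ₗ[R] M where
  toFun m := t • m
  map_add' x y := smul_add t x y
  map_smul' b m := by
    simp only [RingHom.id_apply, smul_smul]
    rw [Subring.mem_center_iff.mp ht b]

@[simp] lemma centralSmul_apply (t : R) (ht : t ∈ Subring.center R)
    (M : Type u) [AddCommGroup M] [Module R M] (x : M) :
    centralSmul t ht M x = t • x := rfl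

/-- Transport along an equality of indices, as a linear map. -/
def lcast (C : ℤ → Type u) [∀ j, AddCommGroup (C j)] [∀ j, Module R (C j)]
    {a b : ℤ} (h : a = b) : C a →ₗ[R] C b := by subst h; exact LinearMap.id

/-- The differential of the Hom-complex `Hom_R(P, C)` of two cochain complexes of
`R`-modules: its degree-`n` term is `∏ j, Hom_R(P^j, C^(j+n))` and the differential is
`f ↦ d_C ∘ f - (-1)^n f ∘ d_P`. -/
def homDiff {P C : ℤ → Type u}
    [∀ j, AddCommGroup (P j)] [∀ j, Module R (P j)]
    [∀ j, AddCommGroup (C j)] [∀ j, Module R (C j)]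
    (dP : ∀ j : ℤ, P j →ₗ[R] P (j + 1)) (dC : ∀ j : ℤ, C j →ₗ[R] C (j + 1))
    (n : ℤ) (f : ∀ j : ℤ, P j →ₗ[R] C (j + n)) :
    ∀ j : ℤ, P j →ₗ[R] C (j + (n + 1)) :=
  fun j =>
    ((lcast C (by omega : j + n + 1 = j + (n + 1))).comp ((dC (j + n)).comp (f j))) -
      (((Int.negOnePow n : ℤˣ) : ℤ) •
        ((lcast C (by omega : j + 1 + n = j + (n + 1))).comp ((f (j + 1)).comp (dP j))))

/-- The degree-`j` term `P^j ⧸ t P^j` of the reduction `P ⧸ tP` of a complex. -/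
def redMod (t : R) (ht : t ∈ Subring.center R)
    (P : ℤ → Type u) [∀ j, AddCommGroup (P j)] [∀ j, Module R (P j)] (j : ℤ) :=
  P j ⧸ LinearMap.range (centralSmul t ht (P j))

noncomputable instance (t : R) (ht : t ∈ Subring.center R)
    (P : ℤ → Type u) [∀ j, AddCommGroup (P j)] [∀ j, Module R (P j)] (j : ℤ) :
    AddCommGroup (redMod t ht P j) :=
  inferInstanceAs (AddCommGroup (P j ⧸ LinearMap.range (centralSmul t ht (P j))))

noncomputable instance (t : R) (ht : t ∈ Subring.center R)
    (P : ℤ → Type u) [∀ j, AddCommGroup (P j)] [∀ j, Module R (P j)] (j : ℤ) :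
    Module R (redMod t ht P j) :=
  inferInstanceAs (Module R (P j ⧸ LinearMap.range (centralSmul t ht (P j))))

/-- The differential induced on the reduction `P ⧸ tP`. -/
def redDiff (t : R) (ht : t ∈ Subring.center R)
    (P : ℤ → Type u) [∀ j, AddCommGroup (P j)] [∀ j, Module R (P j)]
    (dP : ∀ j : ℤ, P j →ₗ[R] P (j + 1)) (j : ℤ) :
    redMod t ht P j →ₗ[R] redMod t ht P (j + 1) :=
  Submodule.mapQ _ _ (dP j) (by
    rintro x ⟨y, rfl⟩
    exact LinearMap.mem_range.mpr ⟨dP j y, by simp⟩)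

end Defs

section Helpers

variable {R : Type u} [Ring R]

lemma lcast_lcast (C : ℤ → Type u) [∀ j, AddCommGroup (C j)] [∀ j, Module R (C j)]
    {a b c : ℤ} (h : a = b) (h' : b = c) (x : C a) :
    lcast (R := R) C h' (lcast (R := R) C h x) = lcast (R := R) C (h.trans h') x := by
  subst h; subst h'; rfl

lemma lcast_rfl (C : ℤ → Type u) [∀ j, AddCommGroup (C j)] [∀ j, Module R (C j)]
    {a : ℤ} (h : a = a) (x : C a) : lcast (R := R) C h x = x := rfl

lemma lcast_diff (C : ℤ → Type u) [∀ j, AddCommGroup (C j)] [∀ j, Module R (C j)]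
    (dC : ∀ j : ℤ, C j →ₗ[R] C (j + 1))
    {a b : ℤ} (h : a = b) (x : C a) :
    dC b (lcast (R := R) C h x) =
      lcast (R := R) C (show a + 1 = b + 1 by rw [h]) (dC a x) := by
  subst h; rfl

lemma lcast_nat (C D : ℤ → Type u) [∀ j, AddCommGroup (C j)] [∀ j, Module R (C j)]
    [∀ j, AddCommGroup (D j)] [∀ j, Module R (D j)]
    (F : ∀ j : ℤ, C j →ₗ[R] D j)
    {a b : ℤ} (h : a = b) (x : C a) :
    F b (lcast (R := R) C h x) = lcast (R := R) D h (F a x) := by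
  subst h; rfl

lemma lcast_fam (P C : ℤ → Type u) [∀ j, AddCommGroup (C j)] [∀ j, Module R (C j)]
    [∀ j, AddCommGroup (P j)] [∀ j, Module R (P j)] (n : ℤ)
    (F : ∀ j : ℤ, P j →ₗ[R] C (j + n))
    {a b : ℤ} (h : a = b) (x : P a) :
    F b (lcast (R := R) P h x) =
      lcast (R := R) C (show a + n = b + n by rw [h]) (F a x) := by
  subst h; rfl

variable {P C : ℤ → Type u}
    [∀ j, AddCommGroup (P j)] [∀ j, Module R (P j)]
    [∀ j, AddCommGroup (C j)] [∀ j, Module R (C j)]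
    (dP : ∀ j : ℤ, P j →ₗ[R] P (j + 1)) (dC : ∀ j : ℤ, C j →ₗ[R] C (j + 1))

lemma homDiff_apply (n : ℤ) (f : ∀ j : ℤ, P j →ₗ[R] C (j + n)) (j : ℤ) (x : P j) :
    homDiff dP dC n f j x =
      lcast (R := R) C (by omega : j + n + 1 = j + (n + 1)) (dC (j + n) (f j x)) -
      ((Int.negOnePow n : ℤˣ) : ℤ) •
        lcast (R := R) C (by omega : j + 1 + n = j + (n + 1)) (f (j + 1) (dP j x)) := rfl

lemma homDiff_add (n : ℤ) (f g : ∀ j : ℤ, P j →ₗ[R] C (j + n)) :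
    homDiff dP dC n (f + g) = homDiff dP dC n f + homDiff dP dC n g := by
  funext j
  ext x
  simp only [homDiff_apply, Pi.add_apply, LinearMap.add_apply, map_add, smul_add]
  abel

lemma homDiff_sub (n : ℤ) (f g : ∀ j : ℤ, P j →ₗ[R] C (j + n)) :
    homDiff dP dC n (f - g) = homDiff dP dC n f - homDiff dP dC n g := by
  rw [eq_sub_iff_add_eq, ← homDiff_add, sub_add_cancel]

lemma homDiff_homDiff (hdP : ∀ (j : ℤ) (x : P j), dP (j + 1) (dP j x) = 0)
    (hdC : ∀ (j : ℤ) (x : C j), dC (j + 1) (dC j x) = 0)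
    (n : ℤ) (f : ∀ j : ℤ, P j →ₗ[R] C (j + n)) :
    homDiff dP dC (n + 1) (homDiff dP dC n f) = 0 := by
  funext j
  ext x
  simp only [homDiff_apply, map_sub, map_zsmul, lcast_diff, lcast_lcast, hdP, hdC, map_zero,
    Int.negOnePow_succ, Pi.zero_apply, LinearMap.zero_apply, smul_zero, sub_zero, zero_sub,
    Units.val_neg, neg_smul, sub_neg_eq_add]
  rw [map_neg, map_zsmul, lcast_lcast, neg_add_cancel]

lemma homDiff_comp {D : ℤ → Type u} [∀ j, AddCommGroup (D j)] [∀ j, Module R (D j)]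
    (dD : ∀ j : ℤ, D j →ₗ[R] D (j + 1)) (F : ∀ j : ℤ, C j →ₗ[R] D j)
    (hF : ∀ (j : ℤ) (x : C j), F (j + 1) (dC j x) = dD j (F j x))
    (n : ℤ) (f : ∀ j : ℤ, P j →ₗ[R] C (j + n)) :
    homDiff dP dD n (fun j => (F (j + n)).comp (f j)) =
      fun j => (F (j + (n + 1))).comp (homDiff dP dC n f j) := by
  funext j
  ext x
  simp only [homDiff_apply, LinearMap.comp_apply, map_sub, map_zsmul, lcast_nat C D F, hF]

lemma homDiff_precomp {Q : ℤ → Type u} [∀ j, AddCommGroup (Q j)] [∀ j, Module R (Q j)]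
    (dQ : ∀ j : ℤ, Q j →ₗ[R] Q (j + 1)) (F : ∀ j : ℤ, Q j →ₗ[R] P j)
    (hF : ∀ (j : ℤ) (x : Q j), F (j + 1) (dQ j x) = dP j (F j x))
    (n : ℤ) (f : ∀ j : ℤ, P j →ₗ[R] C (j + n)) :
    homDiff dQ dC n (fun j => (f j).comp (F j)) =
      fun j => (homDiff dP dC n f j).comp (F j) := by
  funext j
  ext x
  simp only [homDiff_apply, LinearMap.comp_apply, hF]

/-- The projection onto the reduction. -/
def redProj (t : R) (ht : t ∈ Subring.center R)
    (P : ℤ → Type u) [∀ j, AddCommGroup (P j)] [∀ j, Module R (P j)] (j : ℤ) :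
    P j →ₗ[R] redMod t ht P j :=
  Submodule.mkQ (LinearMap.range (centralSmul t ht (P j)))

lemma redProj_surj (t : R) (ht : t ∈ Subring.center R)
    (P : ℤ → Type u) [∀ j, AddCommGroup (P j)] [∀ j, Module R (P j)] (j : ℤ) :
    Function.Surjective (redProj t ht P j) :=
  Submodule.mkQ_surjective _

lemma redProj_eq_zero (t : R) (ht : t ∈ Subring.center R)
    (P : ℤ → Type u) [∀ j, AddCommGroup (P j)] [∀ j, Module R (P j)] (j : ℤ) (x : P j) :
    redProj t ht P j x = 0 ↔ ∃ m, x = t • m := by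
  refine (Submodule.Quotient.mk_eq_zero _).trans ?_
  simp [LinearMap.mem_range, eq_comm]

lemma redProj_diff (t : R) (ht : t ∈ Subring.center R) (j : ℤ) (x : P j) :
    redProj t ht P (j + 1) (dP j x) = redDiff t ht P dP j (redProj t ht P j x) := rfl

/-- Maps to modules killed by `t` factor through the reduction. -/
def redLift (t : R) (ht : t ∈ Subring.center R)
    (P : ℤ → Type u) [∀ j, AddCommGroup (P j)] [∀ j, Module R (P j)] (j : ℤ)
    {N : Type u} [AddCommGroup N] [Module R N] (hN : ∀ x : N, t • x = 0) (f : P j →ₗ[R] N) :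
    redMod t ht P j →ₗ[R] N :=
  Submodule.liftQ _ f (by
    rintro x ⟨y, rfl⟩
    simp [hN])

lemma redLift_proj (t : R) (ht : t ∈ Subring.center R)
    (P : ℤ → Type u) [∀ j, AddCommGroup (P j)] [∀ j, Module R (P j)] (j : ℤ)
    {N : Type u} [AddCommGroup N] [Module R N] (hN : ∀ x : N, t • x = 0) (f : P j →ₗ[R] N) :
    (redLift t ht P j hN f).comp (redProj t ht P j) = f := by
  ext x; rfl

end Helpers

/-- Let `R` be a ring, `t` central with `t² = 0`, and `R̄ = R/(t)` the
quotient by the two-sided ideal generated by `t` (presented by a surjective ring map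
`π : R → S` whose kernel is `{r * t | r}`, which equals `{t * r | r}` as `t` is central).
Let `P` be a cochain complex of `R`-modules with each `P^j` projective, whose reduction
`P ⧸ tP` is homotopy projective over `R̄`: for every acyclic complex `C` of `R̄`-modules
(an `R`-complex killed by `ker π`; `R`-linear maps from `P ⧸ tP` to such `C` are exactly
the `R̄`-linear ones) the Hom-complex `Hom(P ⧸ tP, C)` is acyclic.  Then for every complex
`M` of `R`-modules with `tM` and `M ⧸ tM` acyclic, the Hom-complex `Hom_R(P, M)` is
acyclic; in particular every morphism of complexes `P → M` is null-homotopic via an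
`R`-linear chain homotopy. -/
theorem hom_complex_acyclic_of_gr_acyclic
    {R : Type u} [Ring R] (t : R) (ht : t ∈ Subring.center R) (ht2 : t ^ 2 = 0)
    (S : Type u) [Ring S] (π : R →+* S) (hπ : Function.Surjective π)
    (hker : ∀ x : R, π x = 0 ↔ ∃ r : R, x = r * t)
    (P : ℤ → Type u) [∀ j, AddCommGroup (P j)] [∀ j, Module R (P j)]
    [∀ j, Module.Projective R (P j)]
    (dP : ∀ j : ℤ, P j →ₗ[R] P (j + 1))
    (hdP : ∀ (j : ℤ) (x : P j), dP (j + 1) (dP j x) = 0)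
    -- `P ⧸ tP` is homotopy projective over `R̄`:
    (hhp : ∀ (C : ℤ → Type u) [∀ j, AddCommGroup (C j)] [∀ j, Module R (C j)]
      (dC : ∀ j : ℤ, C j →ₗ[R] C (j + 1)),
      (∀ (j : ℤ) (x : C j), dC (j + 1) (dC j x) = 0) →
      (∀ a : R, π a = 0 → ∀ (j : ℤ) (x : C j), a • x = 0) →
      (∀ (j : ℤ) (x : C (j + 1)), dC (j + 1) x = 0 → ∃ y : C j, dC j y = x) →
      ∀ (n : ℤ) (f : ∀ j : ℤ, redMod t ht P j →ₗ[R] C (j + (n + 1))),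
        homDiff (redDiff t ht P dP) dC (n + 1) f = 0 →
        ∃ g : ∀ j : ℤ, redMod t ht P j →ₗ[R] C (j + n),
          homDiff (redDiff t ht P dP) dC n g = f) :
    ∀ (M : ℤ → Type u) [∀ j, AddCommGroup (M j)] [∀ j, Module R (M j)]
      (dM : ∀ j : ℤ, M j →ₗ[R] M (j + 1)),
      (∀ (j : ℤ) (x : M j), dM (j + 1) (dM j x) = 0) →
      -- the subcomplex `tM` is acyclic:
      (∀ (j : ℤ) (x : M (j + 1)), (∃ m, x = t • m) → dM (j + 1) x = 0 →
        ∃ y : M j, (∃ m, y = t • m) ∧ dM j y = x) →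
      -- the quotient complex `M ⧸ tM` is acyclic:
      (∀ (j : ℤ) (x : M (j + 1)), (∃ m, dM (j + 1) x = t • m) →
        ∃ y : M j, ∃ m, dM j y - x = t • m) →
      -- the Hom-complex `Hom_R(P, M)` is acyclic:
      ((∀ (n : ℤ) (f : ∀ j : ℤ, P j →ₗ[R] M (j + (n + 1))),
        homDiff dP dM (n + 1) f = 0 →
        ∃ g : ∀ j : ℤ, P j →ₗ[R] M (j + n), homDiff dP dM n g = f) ∧
      -- in particular, every morphism of complexes `P → M` is null-homotopic:
      (∀ (φ : ∀ j : ℤ, P j →ₗ[R] M j),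
        (∀ (j : ℤ) (x : P j), φ (j + 1) (dP j x) = dM j (φ j x)) →
        ∃ h : ∀ j : ℤ, P (j + 1) →ₗ[R] M j,
          ∀ (j : ℤ) (x : P (j + 1)),
            φ (j + 1) x = dM j (h j x) + h (j + 1) (dP (j + 1) x))) := by
  intro M _ _ dM hdM hsub hquot
  have hπt : ∀ a : R, π a = 0 → ∃ r, a = r * t := fun a => (hker a).1
  -- acyclicity of `Hom(P, C)` for `C` acyclic and killed by `t`
  have key : ∀ (C : ℤ → Type u) [∀ j, AddCommGroup (C j)] [∀ j, Module R (C j)]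
      (dC : ∀ j : ℤ, C j →ₗ[R] C (j + 1)),
      (∀ (j : ℤ) (x : C j), dC (j + 1) (dC j x) = 0) →
      (∀ (j : ℤ) (x : C j), t • x = 0) →
      (∀ (j : ℤ) (x : C (j + 1)), dC (j + 1) x = 0 → ∃ y : C j, dC j y = x) →
      ∀ (n : ℤ) (f : ∀ j : ℤ, P j →ₗ[R] C (j + (n + 1))),
        homDiff dP dC (n + 1) f = 0 →
        ∃ g : ∀ j : ℤ, P j →ₗ[R] C (j + n), homDiff dP dC n g = f := by
    intro C _ _ dC hdC hC hac n f hf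
    have hpre := fun (m : ℤ) (u : ∀ j : ℤ, redMod t ht P j →ₗ[R] C (j + m)) =>
      homDiff_precomp (redDiff t ht P dP) dC dP (redProj t ht P) (redProj_diff dP t ht) m u
    obtain ⟨g, hg⟩ := hhp C dC hdC (by
        intro a ha j x
        obtain ⟨r, rfl⟩ := hπt a ha
        rw [mul_smul, hC, smul_zero]) hac n
      (fun j => redLift t ht P j (hC _) (f j)) (by
        funext j
        ext x
        obtain ⟨y, rfl⟩ := redProj_surj t ht P j x
        have h1 := hpre (n + 1) (fun j => redLift t ht P j (hC _) (f j))
        simp only [redLift_proj] at h1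
        rw [hf] at h1
        exact (LinearMap.congr_fun (congrFun h1 j) y).symm)
    refine ⟨fun j => (g j).comp (redProj t ht P j), ?_⟩
    rw [hpre n g, hg]
    funext j
    exact redLift_proj t ht P j (hC _) (f j)
  have main : ∀ (n : ℤ) (f : ∀ j : ℤ, P j →ₗ[R] M (j + (n + 1))),
        homDiff dP dM (n + 1) f = 0 →
        ∃ g : ∀ j : ℤ, P j →ₗ[R] M (j + n), homDiff dP dM n g = f := by
    intro n f hf
    -- step one: modulo `t`
    obtain ⟨g0, hg0⟩ := key (redMod t ht M) (redDiff t ht M dM)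
      (by
        intro j x
        obtain ⟨y, rfl⟩ := redProj_surj t ht M j x
        rw [← redProj_diff, ← redProj_diff, hdM, map_zero])
      (by
        intro j x
        obtain ⟨y, rfl⟩ := redProj_surj t ht M j x
        rw [← map_smul, redProj_eq_zero]
        exact ⟨y, rfl⟩)
      (by
        intro j x hx
        obtain ⟨y, rfl⟩ := redProj_surj t ht M (j + 1) x
        rw [← redProj_diff, redProj_eq_zero] at hx
        obtain ⟨z, m, hz⟩ := hquot j y hx
        refine ⟨redProj t ht M j z, ?_⟩
        rw [← redProj_diff, ← sub_eq_zero, ← map_sub, redProj_eq_zero]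
        exact ⟨m, hz⟩)
      n (fun j => (redProj t ht M _).comp (f j)) (by
        rw [homDiff_comp dP dM (redDiff t ht M dM) (redProj t ht M) (redProj_diff dM t ht), hf]
        funext j
        simp)
    have hlift : ∀ j, ∃ g : P j →ₗ[R] M (j + n), (redProj t ht M (j + n)).comp g = g0 j :=
      fun j => Module.projective_lifting_property _ _ (redProj_surj t ht M (j + n))
    choose g hg using hlift
    -- step two: the error lands in `tM`
    let T : ℤ → Type u := fun j => LinearMap.range (centralSmul t ht (M j))
    let dT : ∀ j : ℤ, T j →ₗ[R] T (j + 1) := fun j => (dM j).restrict (by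
      rintro x ⟨y, rfl⟩
      exact ⟨dM j y, by simp⟩)
    let ι : ∀ j : ℤ, T j →ₗ[R] M j := fun j => Submodule.subtype _
    have hι : ∀ (j : ℤ) (x : T j), ι (j + 1) (dT j x) = dM j (ι j x) := fun j x => rfl
    have hιinj : ∀ j, Function.Injective (ι j) := fun j => Submodule.subtype_injective _
    have hιT : ∀ (j : ℤ) (x : T j), ∃ m, ι j x = t • m := by
      rintro j ⟨x, y, rfl⟩
      exact ⟨y, rfl⟩
    have hmem : ∀ (j : ℤ) (x : P j), (f - homDiff dP dM n g) j x ∈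
        LinearMap.range (centralSmul t ht (M (j + (n + 1)))) := by
      intro j x
      have h0 : redProj t ht M (j + (n + 1)) ((f - homDiff dP dM n g) j x) = 0 := by
        have h1 := homDiff_comp dP dM (redDiff t ht M dM) (redProj t ht M)
          (redProj_diff dM t ht) n g
        simp only [hg] at h1
        have h2 := LinearMap.congr_fun (congrFun (hg0.symm.trans h1) j) x
        simp only [LinearMap.comp_apply] at h2
        simp only [Pi.sub_apply, LinearMap.sub_apply, map_sub]
        rw [h2, sub_self]
      obtain ⟨m, hm⟩ := (redProj_eq_zero t ht M _ _).1 h0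
      exact ⟨m, hm.symm⟩
    let e : ∀ j : ℤ, P j →ₗ[R] T (j + (n + 1)) := fun j =>
      ((f - homDiff dP dM n g) j).codRestrict _ (hmem j)
    have he : (fun j => (ι (j + (n + 1))).comp (e j)) = f - homDiff dP dM n g := by
      funext j; ext x; rfl
    obtain ⟨h, hh⟩ := key T dT
      (by
        intro j x
        apply hιinj
        rw [hι, hι, hdM, map_zero])
      (by
        intro j x
        apply hιinj
        obtain ⟨m, hm⟩ := hιT j x
        rw [map_smul, hm, smul_smul, ← pow_two, ht2, zero_smul, map_zero])
      (by
        intro j x hx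
        obtain ⟨y, ⟨m, rfl⟩, hy⟩ := hsub j (ι (j + 1) x) (hιT _ x) (by
          rw [← hι, hx, map_zero])
        refine ⟨⟨t • m, m, rfl⟩, ?_⟩
        apply hιinj
        exact hy)
      n e (by
        have h1 := homDiff_comp dP dT dM ι hι (n + 1) e
        rw [he, homDiff_sub, hf, homDiff_homDiff dP dM hdP hdM, sub_zero] at h1
        funext j
        ext x
        have h2 := LinearMap.congr_fun (congrFun h1 j) x
        apply congrArg Subtype.val (hιinj _ (h2.symm.trans (map_zero _).symm)))
    refine ⟨g + fun j => (ι (j + n)).comp (h j), ?_⟩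
    rw [homDiff_add, homDiff_comp dP dT dM ι hι n h, hh, he]
    abel
  refine ⟨main, ?_⟩
  intro φ hφ
  obtain ⟨g, hg⟩ := main (-1)
    (fun j => (lcast M (by omega : j = j + (-1 + 1))).comp (φ j)) (by
      funext j
      ext x
      simp only [homDiff_apply, LinearMap.comp_apply, lcast_diff, lcast_lcast, hφ]
      simp)
  refine ⟨fun j => (lcast M (by omega : j + 1 + -1 = j)).comp (g (j + 1)), ?_⟩
  intro j x
  have h1 := congrArg (lcast (R := R) M (by omega : j + 1 + (-1 + 1) = j + 1))
    (LinearMap.congr_fun (congrFun hg (j + 1)) x)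
  simp only [homDiff_apply, LinearMap.comp_apply, map_sub, map_zsmul, lcast_lcast] at h1
  rw [lcast_rfl] at h1
  simp only [LinearMap.comp_apply, lcast_diff]
  rw [← h1]
  simp
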